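/- Let z1, z2, z3 be pairwise distinct complex numbers. For u = (u1,u2,u3) ∈ ℂ³ set w_{ij}(u) = (u_j - u_i)/(z_j - z_i). Then for all u, u' ∈ ℂ³: (1/8)·Σ_{cyc} [ w_{23}(u)·conj(w_{31}(u')) - w_{23}(u')·conj(w_{31}(u)) + conj(w_{23}(u))·w_{31}(u') - conj(w_{23}(u'))·w_{31}(u) ] = (1/2)·Σ_{cyc} [ Re w_{12}(u)·Re w_{23}(u') - Re w_{12}(u')·Re w_{23}(u) ], where Σ_{cyc} denotes the sum over the cyclic permutations (1,2,3) → (2,3,1) → (3,1,2) of the indices. That is, the Delaunay face 2-form satisfies ω_D = (1/2)(dλ12∧dλ23 + dλ23∧dλ31 + dλ31∧dλ12). -/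

import Mathlib

open ComplexConjugate

/-- Value on the tangent vector with components `ui, uj` of the complex 1-form
`d log (z_j - z_i)` : `w_{ij}(u) = (u_j - u_i)/(z_j - z_i)`. -/
noncomputable def wform (zi zj ui uj : ℂ) : ℂ := (uj - ui) / (zj - zi)

/-! The real form `2 dλ_{ij}` is `w_{ij}` plus its conjugate, so expanding `4 dλ ∧ dλ'` gives the
mixed terms `w ∧ conj w' + conj w ∧ w'` of `ω_D`, together with `w ∧ w'` and its conjugate. The
latter two cancel in the cyclic sum by the Arnold relation
`w_{12} ∧ w_{23} + w_{23} ∧ w_{31} + w_{31} ∧ w_{12} = 0`. -/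

section Wedge

variable {R : Type*} [CommRing R]

/-- The value `(α ∧ β)(u, v)` of the wedge product of two 1-forms at a fixed pair of vectors `u, v`,
on which it depends only through `a = (α u, α v)` and `b = (β u, β v)`. -/
def wedge (a b : R × R) : R := a.1 * b.2 - a.2 * b.1

lemma wedge_smul_smul (x y : R) (a b : R × R) :
    wedge (x • a) (y • b) = x * y * wedge a b := by
  simp only [wedge, Prod.smul_fst, Prod.smul_snd, smul_eq_mul]
  ring

lemma wedge_rotate_of_add_eq_zero {a b c : R × R} (h : a + b + c = 0) : wedge b c = wedge a b := by
  obtain rfl : c = -(a + b) := (neg_eq_of_add_eq_zero_right h).symm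
  simp only [wedge, Prod.fst_neg, Prod.snd_neg, Prod.fst_add, Prod.snd_add]
  ring

lemma inv_mul_inv_cyclic_sum_eq_zero {K : Type*} [Field K] {x y z : K}
    (hx : x ≠ 0) (hy : y ≠ 0) (hz : z ≠ 0) (h : x + y + z = 0) :
    x⁻¹ * y⁻¹ + y⁻¹ * z⁻¹ + z⁻¹ * x⁻¹ = 0 := by
  calc x⁻¹ * y⁻¹ + y⁻¹ * z⁻¹ + z⁻¹ * x⁻¹ = (x + y + z) / (x * y * z) := by field_simp; ring
    _ = 0 := by rw [h, zero_div]

/-- The Arnold relation for the logarithmic forms `dx / x`, `dy / y`, `dz / z`. -/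
theorem wedge_inv_smul_cyclic_sum_eq_zero {K : Type*} [Field K] {x y z : K}
    (hx : x ≠ 0) (hy : y ≠ 0) (hz : z ≠ 0) (hxyz : x + y + z = 0)
    {a b c : K × K} (habc : a + b + c = 0) :
    wedge (x⁻¹ • a) (y⁻¹ • b) + wedge (y⁻¹ • b) (z⁻¹ • c) + wedge (z⁻¹ • c) (x⁻¹ • a) = 0 := by
  have hbc : wedge b c = wedge a b := wedge_rotate_of_add_eq_zero habc
  have hca : wedge c a = wedge a b :=
    (wedge_rotate_of_add_eq_zero (by rw [← habc]; abel)).trans hbc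
  rw [wedge_smul_smul, wedge_smul_smul, wedge_smul_smul, hbc, hca, ← add_mul, ← add_mul,
    inv_mul_inv_cyclic_sum_eq_zero hx hy hz hxyz, zero_mul]

lemma wedge_add_star_add_star [StarRing R] (a b : R × R) :
    wedge (a + star a) (b + star b) =
      wedge a b + star (wedge a b) + (wedge a (star b) + wedge (star a) b) := by
  simp only [wedge, Prod.fst_add, Prod.snd_add, Prod.fst_star, Prod.snd_star, star_sub, star_mul']
  ring

theorem wedge_add_star_add_star_cyclic_sum [StarRing R] {a b c : R × R}
    (h : wedge a b + wedge b c + wedge c a = 0) :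
    wedge (a + star a) (b + star b) + wedge (b + star b) (c + star c) +
        wedge (c + star c) (a + star a) =
      (wedge a (star b) + wedge (star a) b) + (wedge b (star c) + wedge (star b) c) +
        (wedge c (star a) + wedge (star c) a) := by
  have h_star : star (wedge a b) + star (wedge b c) + star (wedge c a) = 0 := by
    rw [← star_add, ← star_add, h, star_zero]
  simp only [wedge_add_star_add_star]
  linear_combination h + h_star

lemma wedge_add_star_add_star_eq_re (a b : ℂ × ℂ) :
    wedge (a + star a) (b + star b) = 4 * (a.1.re * b.2.re - a.2.re * b.1.re : ℂ) := by
  simp only [wedge, Prod.fst_add, Prod.snd_add, Prod.fst_star, Prod.snd_star,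
    Complex.star_def, Complex.add_conj, Complex.ofReal_mul, Complex.ofReal_ofNat]
  ring

end Wedge

lemma wform_pair_eq_inv_smul (zi zj ui uj vi vj : ℂ) :
    (wform zi zj ui uj, wform zi zj vi vj) = (zj - zi)⁻¹ • (uj - ui, vj - vi) := by
  simp only [wform, div_eq_inv_mul, Prod.smul_mk, smul_eq_mul]

theorem wedge_wform_cyclic_sum_eq_zero {z1 z2 z3 : ℂ}
    (h12 : z1 ≠ z2) (h13 : z1 ≠ z3) (h23 : z2 ≠ z3) (u1 u2 u3 v1 v2 v3 : ℂ) :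
    wedge (wform z1 z2 u1 u2, wform z1 z2 v1 v2) (wform z2 z3 u2 u3, wform z2 z3 v2 v3) +
      wedge (wform z2 z3 u2 u3, wform z2 z3 v2 v3) (wform z3 z1 u3 u1, wform z3 z1 v3 v1) +
      wedge (wform z3 z1 u3 u1, wform z3 z1 v3 v1) (wform z1 z2 u1 u2, wform z1 z2 v1 v2) = 0 := by
  simp only [wform_pair_eq_inv_smul]
  refine wedge_inv_smul_cyclic_sum_eq_zero (sub_ne_zero.mpr h12.symm) (sub_ne_zero.mpr h23.symm)
    (sub_ne_zero.mpr h13) (by ring) ?_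
  ext <;> simp

/-- the Delaunay face 2-form satisfies
`ω_D = (1/2)(dλ12∧dλ23 + dλ23∧dλ31 + dλ31∧dλ12)`. -/
theorem delaunay_face_form_eq_half_length (z1 z2 z3 : ℂ)
    (h12 : z1 ≠ z2) (h13 : z1 ≠ z3) (h23 : z2 ≠ z3)
    (u1 u2 u3 v1 v2 v3 : ℂ) :
    (1 / 8 : ℂ) *
      ((wform z2 z3 u2 u3 * conj (wform z3 z1 v3 v1)
          - wform z2 z3 v2 v3 * conj (wform z3 z1 u3 u1)
          + conj (wform z2 z3 u2 u3) * wform z3 z1 v3 v1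
          - conj (wform z2 z3 v2 v3) * wform z3 z1 u3 u1)
        + (wform z3 z1 u3 u1 * conj (wform z1 z2 v1 v2)
          - wform z3 z1 v3 v1 * conj (wform z1 z2 u1 u2)
          + conj (wform z3 z1 u3 u1) * wform z1 z2 v1 v2
          - conj (wform z3 z1 v3 v1) * wform z1 z2 u1 u2)
        + (wform z1 z2 u1 u2 * conj (wform z2 z3 v2 v3)
          - wform z1 z2 v1 v2 * conj (wform z2 z3 u2 u3)
          + conj (wform z1 z2 u1 u2) * wform z2 z3 v2 v3
          - conj (wform z1 z2 v1 v2) * wform z2 z3 u2 u3))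
    = ((1 / 2 : ℝ) *
        (((wform z1 z2 u1 u2).re * (wform z2 z3 v2 v3).re
            - (wform z1 z2 v1 v2).re * (wform z2 z3 u2 u3).re)
          + ((wform z2 z3 u2 u3).re * (wform z3 z1 v3 v1).re
            - (wform z2 z3 v2 v3).re * (wform z3 z1 u3 u1).re)
          + ((wform z3 z1 u3 u1).re * (wform z1 z2 v1 v2).re
            - (wform z3 z1 v3 v1).re * (wform z1 z2 u1 u2).re)) : ℂ) := by
  have sum_re := wedge_add_star_add_star_cyclic_sum
    (wedge_wform_cyclic_sum_eq_zero h12 h13 h23 u1 u2 u3 v1 v2 v3)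
  simp only [wedge_add_star_add_star_eq_re] at sum_re
  simp only [wedge, Prod.fst_star, Prod.snd_star, Complex.star_def] at sum_re
  push_cast
  linear_combination (-1 / 8 : ℂ) * sum_re
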